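/- arXiv:1801.07541 — 2 statements merged into one kernel-verified Lean document; each statement's English description precedes it below -/
import Mathlib

section
/- Let a, b be positive integers and let w ≤ a, h ≤ b be positive reals. Let R be a finite family of rectangles, each of width at most w and height at most h. Then there exist a subfamily R' ⊆ R and a feasible packing of R' into the bin [0,a]×[0,b] such that either R' = R or a(R') ≥ (a−w)·(b−h). -/
open scoped Classical

/-- Open axis-aligned rectangles `(x₁, x₁+w₁) × (y₁, y₁+h₁)` and `(x₂, x₂+w₂) × (y₂, y₂+h₂)`
are disjoint. -/
def RectDisjoint (x₁ y₁ w₁ h₁ x₂ y₂ w₂ h₂ : ℕ) : Prop :=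
  x₁ + w₁ ≤ x₂ ∨ x₂ + w₂ ≤ x₁ ∨ y₁ + h₁ ≤ y₂ ∨ y₂ + h₂ ≤ y₁

/-!
Next Fit Decreasing Height fills the bin with horizontal levels, always taking the tallest
remaining rectangles and opening a new level as soon as the next rectangle does not fit. Each closed
level has total width more than `c = a - w`, and all its rectangles are at least as tall as every
rectangle of the next level, so its area is at least `c` times the height of the next level.
The first level needs a strip of height at most `h`; hence, when the bin is exhausted, the heights
of the levels after the first, together with that of the first one that does not fit, add up to at
least `b - h`, and the packed area is at least `(a - w) * (b - h)`.
-/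

section Packing

variable {ι M : Type*} [AddCommMonoid M] [PartialOrder M] {wd ht : ι → M} {a a₁ a₂ b b₁ b₂ : M}
  {S T : Finset ι}

/-- The rectangles `wd i × ht i` with `i ∈ S`, placed with lower left corners `(x i, y i)`, form a
feasible packing of the bin `[0, a] × [0, b]`. Coordinates live in an ordered monoid `M`, meant to
be canonically ordered, so that the constraints `0 ≤ x i` and `0 ≤ y i` are automatic. -/
structure IsPacking_s2 (wd ht : ι → M) (a b : M) (S : Finset ι) (x y : ι → M) : Prop where
  right_le : ∀ i ∈ S, x i + wd i ≤ a
  top_le : ∀ i ∈ S, y i + ht i ≤ b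
  pairwise_disjoint : (S : Set ι).Pairwise fun i j ↦
    x i + wd i ≤ x j ∨ x j + wd j ≤ x i ∨ y i + ht i ≤ y j ∨ y j + ht j ≤ y i

/-- The rectangles `wd i × ht i` with `i ∈ S` have a feasible packing into the bin
`[0, a] × [0, b]`. -/
def Packable (wd ht : ι → M) (a b : M) (S : Finset ι) : Prop :=
  ∃ x y, IsPacking_s2 wd ht a b S x y

namespace Packable

theorem empty : Packable wd ht a b ∅ :=
  ⟨0, 0, by simp, by simp, by simp⟩

theorem singleton {i : ι} (hwd : wd i ≤ a) (hht : ht i ≤ b) : Packable wd ht a b {i} :=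
  ⟨0, 0, by simpa, by simpa, by simp⟩

theorem mono_width (h : Packable wd ht a₁ b S) (ha : a₁ ≤ a₂) : Packable wd ht a₂ b S := by
  obtain ⟨x, y, hxy⟩ := h
  exact ⟨x, y, fun i hi ↦ (hxy.right_le i hi).trans ha, hxy.top_le, hxy.pairwise_disjoint⟩

theorem transpose (h : Packable wd ht a b S) : Packable ht wd b a S := by
  obtain ⟨x, y, hxy⟩ := h
  refine ⟨y, x, hxy.top_le, hxy.right_le, hxy.pairwise_disjoint.imp fun i j hij ↦ ?_⟩
  tauto

variable [CanonicallyOrderedAdd M] [IsOrderedAddMonoid M]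

theorem beside (hS : Packable wd ht a₁ b S) (hT : Packable wd ht a₂ b T) :
    Packable wd ht (a₁ + a₂) b (S ∪ T) := by
  obtain ⟨x₁, y₁, h₁⟩ := hS
  obtain ⟨x₂, y₂, h₂⟩ := hT
  have mem_right {i : ι} (hi : i ∈ S ∪ T) (hiS : i ∉ S) : i ∈ T :=
    (Finset.mem_union.1 hi).resolve_left hiS
  refine ⟨S.piecewise x₁ fun i ↦ a₁ + x₂ i, S.piecewise y₁ y₂, fun i hi ↦ ?_, fun i hi ↦ ?_,
    fun i hi j hj hij ↦ ?_⟩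
  · by_cases hiS : i ∈ S
    · simpa [hiS] using (h₁.right_le i hiS).trans le_self_add
    · simpa [hiS, add_assoc] using add_le_add_right (h₂.right_le i (mem_right hi hiS)) a₁
  · by_cases hiS : i ∈ S
    · simpa [hiS] using h₁.top_le i hiS
    · simpa [hiS] using h₂.top_le i (mem_right hi hiS)
  · by_cases hiS : i ∈ S <;> by_cases hjS : j ∈ S
    · simpa [hiS, hjS] using h₁.pairwise_disjoint hiS hjS hij
    · left
      simpa [hiS, hjS] using (h₁.right_le i hiS).trans le_self_add
    · right; left
      simpa [hiS, hjS] using (h₁.right_le j hjS).trans le_self_add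
    · have hdisj := h₂.pairwise_disjoint (mem_right hi hiS) (mem_right hj hjS) hij
      simp only [hiS, hjS, not_false_eq_true, Finset.piecewise_eq_of_notMem, add_assoc]
      exact hdisj.imp (add_le_add_right · a₁) (Or.imp_left (add_le_add_right · a₁))

theorem stack (hS : Packable wd ht a b₁ S) (hT : Packable wd ht a b₂ T) :
    Packable wd ht a (b₁ + b₂) (S ∪ T) :=
  (hS.transpose.beside hT.transpose).transpose

theorem sum_width (hht : ∀ i ∈ S, ht i ≤ b) : Packable wd ht (∑ i ∈ S, wd i) b S := by
  induction S using Finset.induction_on with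
  | empty => exact empty
  | insert i S hi ih =>
    rw [Finset.forall_mem_insert] at hht
    rw [Finset.sum_insert hi, Finset.insert_eq]
    exact (singleton le_rfl hht.1).beside (ih hht.2)

end Packable

end Packing

section GreedyLevel

variable {ι M N : Type*} [AddCommMonoid M] [LinearOrder M]

/-- `T` is a level that NFDH may form from the remaining rectangles `R` in a bin of width `a`: it
fits, contains the tallest rectangles of `R`, and is closed only if some rectangle of `R \ T` does
not fit next to it. -/
structure IsGreedyLevel [LE N] (wd : ι → M) (ht : ι → N) (a : M) (R T : Finset ι) : Prop where
  subset : T ⊆ R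
  sum_width_le : ∑ i ∈ T, wd i ≤ a
  height_le : ∀ i ∈ T, ∀ j ∈ R \ T, ht j ≤ ht i
  eq_or_exists_lt : T = R ∨ ∃ j ∈ R \ T, a < ∑ i ∈ T, wd i + wd j

theorem exists_isGreedyLevel [LinearOrder N] [CanonicallyOrderedAdd M] (wd : ι → M) (ht : ι → N)
    (a : M) (R : Finset ι) : ∃ T, IsGreedyLevel wd ht a R T := by
  induction R using Finset.induction_on_min_value ht with
  | empty => exact ⟨∅, by simp, by simp, by simp, .inl rfl⟩
  | insert m R hm hmin ih =>
    obtain ⟨T, hT⟩ := ih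
    have hmT : m ∉ T := fun h ↦ hm (hT.subset h)
    have height_le : ∀ i ∈ T, ∀ j ∈ insert m R \ T, ht j ≤ ht i := by
      intro i hi j hj
      rw [Finset.insert_sdiff_of_notMem _ hmT, Finset.mem_insert] at hj
      obtain rfl | hj := hj
      · exact hmin i (hT.subset hi)
      · exact hT.height_le i hi j hj
    have sdiff_subset : R \ T ⊆ insert m R \ T :=
      Finset.sdiff_subset_sdiff (Finset.subset_insert m R) subset_rfl
    have T_subset := hT.subset.trans (Finset.subset_insert m R)
    obtain rfl | ⟨j, hj, hlt⟩ := hT.eq_or_exists_lt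
    · obtain hfit | hlt := le_or_gt (∑ i ∈ T, wd i + wd m) a
      · refine ⟨insert m T, subset_rfl, ?_, by simp, .inl rfl⟩
        rwa [Finset.sum_insert hmT, add_comm]
      · exact ⟨T, T_subset, hT.sum_width_le, height_le, .inr ⟨m, by simp [hmT], hlt⟩⟩
    · exact ⟨T, T_subset, hT.sum_width_le, height_le, .inr ⟨j, sdiff_subset hj, hlt⟩⟩

namespace IsGreedyLevel

section Width

variable [IsOrderedAddMonoid M] [LE N] {wd : ι → M} {ht : ι → N} {a c : M} {R T : Finset ι}

theorem lt_sum_width (hT : IsGreedyLevel wd ht a R T) (hTR : (R \ T).Nonempty)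
    (hwd : ∀ i ∈ R, c + wd i ≤ a) : c < ∑ i ∈ T, wd i := by
  have T_ne : T ≠ R := by rintro rfl; simp at hTR
  obtain ⟨j, hj, hlt⟩ := hT.eq_or_exists_lt.resolve_left T_ne
  exact lt_of_add_lt_add_right ((hwd j (Finset.sdiff_subset hj)).trans_lt hlt)

theorem nonempty [CanonicallyOrderedAdd M] (hT : IsGreedyLevel wd ht a R T)
    (hTR : (R \ T).Nonempty) (hwd : ∀ i ∈ R, c + wd i ≤ a) : T.Nonempty :=
  Finset.nonempty_of_sum_ne_zero (pos_of_gt (hT.lt_sum_width hTR hwd)).ne'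

end Width

theorem packable [CanonicallyOrderedAdd M] [IsOrderedAddMonoid M] {wd ht : ι → M} {a b : M}
    {R T : Finset ι} (hT : IsGreedyLevel wd ht a R T) (hht : ∀ i ∈ R, ht i ≤ b) :
    Packable wd ht a b T :=
  (Packable.sum_width fun i hi ↦ hht i (hT.subset hi)).mono_width hT.sum_width_le

end IsGreedyLevel

end GreedyLevel

section AreaGuarantee

variable {ι M : Type*} [Semiring M]

theorem mul_le_sum_mul_of_le_sum [PartialOrder M] [CanonicallyOrderedAdd M] [IsOrderedRing M]
    {f g : ι → M} {c q : M} {T : Finset ι} (hf : c ≤ ∑ i ∈ T, f i) (hg : ∀ i ∈ T, q ≤ g i) :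
    c * q ≤ ∑ i ∈ T, f i * g i :=
  calc c * q ≤ (∑ i ∈ T, f i) * q := by gcongr
    _ = ∑ i ∈ T, f i * q := Finset.sum_mul ..
    _ ≤ ∑ i ∈ T, f i * g i := by gcongr with i hi; exact hg i hi

variable [LinearOrder M] [CanonicallyOrderedAdd M]

theorem IsGreedyLevel.mul_height_le_area [IsOrderedRing M] {wd ht : ι → M} {a c : M}
    {R T : Finset ι} (hT : IsGreedyLevel wd ht a R T) (hwd : ∀ i ∈ R, c + wd i ≤ a) {j : ι}
    (hj : j ∈ R \ T) : c * ht j ≤ ∑ i ∈ T, wd i * ht i :=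
  mul_le_sum_mul_of_le_sum (hT.lt_sum_width ⟨j, hj⟩ hwd).le fun i hi ↦ hT.height_le i hi j hj

/-- The margins `c` and `d` play the roles of `a - w` and `b - h`. -/
theorem nfdh_area_guarantee_general [IsStrictOrderedRing M] {wd ht : ι → M} {a b c d : M}
    {R : Finset ι} (hwd : ∀ i ∈ R, c + wd i ≤ a) (hht : ∀ i ∈ R, d + ht i ≤ b) :
    ∃ S ⊆ R, Packable wd ht a b S ∧ (S = R ∨ c * d ≤ ∑ i ∈ S, wd i * ht i) := by
  induction R using Finset.strongInduction generalizing b d with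
  | H R ih =>
  obtain ⟨T, hT⟩ := exists_isGreedyLevel wd ht a R
  have T_packable : Packable wd ht a b T := hT.packable fun i hi ↦ le_add_self.trans (hht i hi)
  obtain hTR | rest_nonempty := (R \ T).eq_empty_or_nonempty
  · have R_subset : R ⊆ T := Finset.sdiff_eq_empty_iff_subset.1 hTR
    exact ⟨T, hT.subset, T_packable, .inl (hT.subset.antisymm R_subset)⟩
  obtain ⟨q, hq, hq_max⟩ := (R \ T).exists_max_image ht rest_nonempty
  have T_area : c * ht q ≤ ∑ i ∈ T, wd i * ht i := hT.mul_height_le_area hwd hq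
  obtain hdq | hqd := le_total d (ht q)
  · -- The next level may not fit into the bin, but `T` alone has the required area.
    exact ⟨T, hT.subset, T_packable, .inr (le_trans (by gcongr) T_area)⟩
  obtain ⟨m, hm, hm_max⟩ := R.exists_max_image ht ⟨q, Finset.sdiff_subset hq⟩
  obtain ⟨b', rfl⟩ := exists_add_of_le (le_add_self.trans (hht m hm))
  obtain ⟨d', rfl⟩ := exists_add_of_le hqd
  have rest_margin : ∀ i ∈ R \ T, d' + ht i ≤ b' := fun i hi ↦
    calc d' + ht i ≤ d' + ht q := by gcongr; exact hq_max i hi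
      _ = ht q + d' := add_comm ..
      _ ≤ b' := le_of_add_le_add_right ((hht m hm).trans_eq (add_comm ..))
  obtain ⟨S, hS, S_packable, S_area⟩ := ih (R \ T)
    (Finset.sdiff_ssubset hT.subset (hT.nonempty rest_nonempty hwd))
    (fun i hi ↦ hwd i (Finset.sdiff_subset hi)) rest_margin
  refine ⟨T ∪ S, Finset.union_subset hT.subset (hS.trans Finset.sdiff_subset),
    (hT.packable hm_max).stack S_packable, S_area.imp ?_ fun S_area ↦ ?_⟩
  · rintro rfl
    exact Finset.union_sdiff_of_subset hT.subset
  · rw [Finset.sum_union (Finset.disjoint_sdiff.mono_right hS), mul_add]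
    exact add_le_add T_area S_area

end AreaGuarantee

theorem natCeil_sub_add_le {K : Type*} [Ring K] [LinearOrder K] [IsStrictOrderedRing K]
    [FloorSemiring K] {a n : ℕ} {w : K} (hn : n ≤ w) (hwa : w ≤ a) : ⌈a - w⌉₊ + n ≤ a := by
  have hna : n ≤ a := Nat.cast_le.1 (hn.trans hwa)
  rw [← Nat.le_sub_iff_add_le hna, Nat.ceil_le, Nat.cast_sub hna]
  gcongr

/-- Area guarantee of NFDH in a bin (Lemma 2.3): rectangles of width at most `w ≤ a` and
height at most `h ≤ b` can be packed into the bin `[0,a]×[0,b]` so that either all of them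
are packed, or the packed area is at least `(a-w)·(b-h)`. -/
theorem nfdh_area_guarantee
    (a b : ℕ) (ha : 0 < a) (hb : 0 < b)
    (w h : ℝ) (hw : 0 < w) (hwa : w ≤ a) (hh : 0 < h) (hhb : h ≤ b)
    (ι : Type*) [Fintype ι] (wd ht : ι → ℕ)
    (hpos : ∀ i, 0 < wd i ∧ 0 < ht i)
    (hsmall : ∀ i, (wd i : ℝ) ≤ w ∧ (ht i : ℝ) ≤ h) :
    ∃ (S : Finset ι) (x y : ι → ℕ),
      (∀ i ∈ S, x i + wd i ≤ a ∧ y i + ht i ≤ b) ∧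
      (∀ i ∈ S, ∀ j ∈ S, i ≠ j →
        RectDisjoint (x i) (y i) (wd i) (ht i) (x j) (y j) (wd j) (ht j)) ∧
      (S = Finset.univ ∨ ((a : ℝ) - w) * ((b : ℝ) - h) ≤ ∑ i ∈ S, (wd i : ℝ) * ht i) := by
  obtain ⟨S, -, ⟨x, y, hxy⟩, hS⟩ := nfdh_area_guarantee_general (R := Finset.univ)
    (fun i _ ↦ natCeil_sub_add_le (hsmall i).1 hwa) (fun i _ ↦ natCeil_sub_add_le (hsmall i).2 hhb)
  refine ⟨S, x, y, fun i hi ↦ ⟨hxy.right_le i hi, hxy.top_le i hi⟩,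
    fun i hi j hj hij ↦ hxy.pairwise_disjoint hi hj hij, hS.imp_right fun harea ↦ ?_⟩
  calc ((a : ℝ) - w) * (b - h) ≤ ⌈(a : ℝ) - w⌉₊ * ⌈(b : ℝ) - h⌉₊ := by
        gcongr
        exacts [Nat.le_ceil _, Nat.le_ceil _]
    _ ≤ ∑ i ∈ S, (wd i : ℝ) * ht i := mod_cast harea
end

section
/- Let w, h be positive integers and let a finite family of rectangles be feasibly packed into the box [0,w]×[0,h] such that every rectangle touches the top or the bottom edge of the box (i.e., y_i = 0 or y_i + h_i = h). Suppose the heights of the rectangles take at most Γ distinct values and the heights of the rectangles touching the bottom edge take at most k distinct values. Call a rectangle unmovable if its boundary contains a corner of the box (there are at most four such rectangles), and movable otherwise. Then there exists a feasible packing of the same family into the same box in which every unmovable rectangle keeps its position, every rectangle keeps its y-coordinate, and the movable rectangles can be partitioned into at most 6^k·Γ groups such that each group consists of rectangles of one common height all touching the same edge (all touching the top, or all touching the bottom) and the x-intervals (x_i, x_i + w_i) of the rectangles in a group have pairwise disjoint interiors and union whose closure is a single interval (i.e., each group forms a contiguous rectangular sub-box of height equal to the common height). -/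
open scoped Classical

/-- A feasible packing of the family of rectangles `(w i, h i)` at positions `(x i, y i)`
inside `[0,W]×[0,H]`. -/
def IsPacking {ι : Type*} (w h x y : ι → ℕ) (W H : ℕ) : Prop :=
  (∀ i, x i + w i ≤ W ∧ y i + h i ≤ H) ∧
  Pairwise fun i j => RectDisjoint (x i) (y i) (w i) (h i) (x j) (y j) (w j) (h j)

/-- The boundary of the rectangle of width `wd i`, height `ht i` placed at `(x i, y i)`
contains a corner of the box `[0,w]×[0,h]` (such a rectangle is called unmovable). -/
def Unmovable {ι : Type*} (w h : ℕ) (wd ht x y : ι → ℕ) (i : ι) : Prop :=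
  (x i = 0 ∧ y i = 0) ∨ (x i + wd i = w ∧ y i = 0) ∨
  (x i = 0 ∧ y i + ht i = h) ∨ (x i + wd i = w ∧ y i + ht i = h)

/-!
Which edge a rectangle is attached to never changes, so a packing amounts to horizontal positions
in which two rectangles have disjoint `x`-intervals whenever they conflict: they are attached to
the same edge, or to opposite edges and their heights add up to more than the height of the box.

In a vertical strip, call a rectangle active if it clashes with a rectangle on the opposite edge,
and dominant if it clashes with every active one there. The proof is by induction on the number
`m` of heights of active bottom rectangles. Two cuts split the strip: there is no dominant top
rectangle to the left of the first one and no dominant bottom rectangle to the right of the second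
one, so both outer parts lose an active bottom height and a kind (height and edge). The
rectangles crossing the cuts do not prevent the middle part from being sorted by nonincreasing
height, the top ones from its left end and the bottom ones from its right end; this compresses
everything that is at least as high as a given rectangle, hence keeps clashing rectangles apart.

With `N` kinds the induction gives `3 ^ m * N` groups, since
`2 * 3 ^ m * (N - 1) + N + 2 ≤ 3 ^ (m + 1) * N`, the `2` accounting for the rectangles crossing the
cuts. Finally `N ≤ k + Γ ≤ 2 ^ k * Γ`.
-/

/-- A family of rectangles, each attached to the bottom or to the top edge of a box of height
`boxHeight`. Horizontal positions are separate functions `x : ι → ℤ`; they are integers so that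
the box can be reflected in a vertical axis. -/
structure EdgeFamily (ι : Type*) where
  width : ι → ℤ
  width_pos : ∀ i, 0 < width i
  height : ι → ℕ
  bottom : ι → Bool
  boxHeight : ℕ

namespace EdgeFamily

variable {ι : Type*} (B : EdgeFamily ι)

/-- Two rectangles on opposite edges clash if they are too high to be placed one above the
other. -/
def Clash (i j : ι) : Prop :=
  B.bottom i ≠ B.bottom j ∧ B.boxHeight < B.height i + B.height j

/-- Two rectangles conflict if their `x`-intervals have to be disjoint in every packing. -/
def Conflict (i j : ι) : Prop :=
  B.bottom i = B.bottom j ∨ B.Clash i j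

/-- The `x`-intervals of two rectangles do not overlap. -/
def Apart (x : ι → ℤ) (i j : ι) : Prop :=
  x i + B.width i ≤ x j ∨ x j + B.width j ≤ x i

/-- Horizontal positions that give a packing, the vertical extent of the box being respected by
the choice of the edges. -/
def IsPlacement (x : ι → ℤ) : Prop :=
  Pairwise fun i j => B.Conflict i j → B.Apart x i j

/-- The vertical line at abscissa `s` cuts the interior of a rectangle. -/
def Crosses (x : ι → ℤ) (s : ℤ) (i : ι) : Prop :=
  x i < s ∧ s < x i + B.width i

/-- The positions after a reflection in the axis at abscissa `0`. -/
def reflect (x : ι → ℤ) (i : ι) : ℤ :=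
  -(x i + B.width i)

variable {B} {x x' : ι → ℤ} {i j e : ι} {l r s : ℤ}

theorem Clash.symm (h : B.Clash i j) : B.Clash j i :=
  ⟨h.1.symm, add_comm (B.height i) _ ▸ h.2⟩

theorem Conflict.symm (h : B.Conflict i j) : B.Conflict j i :=
  h.imp Eq.symm Clash.symm

theorem Apart.symm (h : B.Apart x i j) : B.Apart x j i :=
  Or.symm h

theorem Apart.congr (h : B.Apart x i j) (hi : x' i = x i) (hj : x' j = x j) :
    B.Apart x' i j := by
  simpa only [Apart, hi, hj] using h

theorem reflect_reflect : B.reflect (B.reflect x) = x := by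
  funext i
  simp [reflect]

theorem apart_reflect : B.Apart (B.reflect x) i j ↔ B.Apart x i j := by
  simp only [Apart, reflect]
  lia

theorem crosses_reflect : B.Crosses (B.reflect x) (-s) i ↔ B.Crosses x s i := by
  simp only [Crosses, reflect]
  lia

theorem IsPlacement.reflect (hx : B.IsPlacement x) : B.IsPlacement (B.reflect x) :=
  fun _ _ hij hc => apart_reflect.2 (hx hij hc)

theorem end_le_of_crosses (hx : B.IsPlacement x) (he : B.Crosses x s e) (hi : s ≤ x i)
    (hc : B.Conflict i e) : x e + B.width e ≤ x i := by
  have hne : i ≠ e := by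
    rintro rfl
    exact hi.not_gt he.1
  have hw := B.width_pos i
  have he₁ := he.1
  rcases hx hne hc with h | h
  · lia
  · exact h

theorem le_start_of_crosses (hx : B.IsPlacement x) (he : B.Crosses x s e)
    (hi : x i + B.width i ≤ s) (hc : B.Conflict i e) : x i + B.width i ≤ x e := by
  have := end_le_of_crosses (i := i) hx.reflect (crosses_reflect.2 he) (by simpa [reflect]) hc
  simpa [reflect] using this

/-- Two such rectangles and `e` would overlap in pairs, but there are only two edges. -/
theorem subsingleton_crosses_start (hx : B.IsPlacement x) (e : ι) :
    {i | B.Crosses x (x e) i}.Subsingleton := by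
  intro i hi j hj
  have apart_of_bottom_eq : ∀ {a b}, a ≠ b → B.bottom a = B.bottom b → B.Apart x a b :=
    fun hab h => hx hab (.inl h)
  by_contra hij
  have hie : i ≠ e := by
    rintro rfl
    exact lt_irrefl _ hi.1
  have hje : j ≠ e := by
    rintro rfl
    exact lt_irrefl _ hj.1
  have hw := B.width_pos e
  obtain ⟨hi₁, hi₂⟩ := hi
  obtain ⟨hj₁, hj₂⟩ := hj
  have h₁ : B.bottom i ≠ B.bottom j := fun h => by
    rcases apart_of_bottom_eq hij h with h | h <;> lia
  have h₂ : B.bottom i ≠ B.bottom e := fun h => by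
    rcases apart_of_bottom_eq hie h with h | h <;> lia
  have h₃ : B.bottom j ≠ B.bottom e := fun h => by
    rcases apart_of_bottom_eq hje h with h | h <;> lia
  exact h₁ ((Bool.eq_not_of_ne h₂).trans (Bool.eq_not_of_ne h₃).symm)

theorem subsingleton_crosses_end (hx : B.IsPlacement x) (e : ι) :
    {i | B.Crosses x (x e + B.width e) i}.Subsingleton := by
  have := subsingleton_crosses_start hx.reflect e
  simpa only [reflect, crosses_reflect] using this

theorem add_sum_width_le {M : Finset ι} {p : ℤ}
    (hM : ∀ i ∈ M, ∀ j ∈ M, i ≠ j → B.Apart x i j) (hp : ∀ i ∈ M, p ≤ x i) {q : ℤ}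
    (hq : ∀ i ∈ M, x i + B.width i ≤ q) (hpq : p ≤ q) : p + ∑ i ∈ M, B.width i ≤ q := by
  induction M using Finset.induction_on_max_value x generalizing q with
  | empty => simpa using hpq
  | insert a M haM hmax ih =>
    have hle : p + ∑ i ∈ M, B.width i ≤ x a := by
      refine ih (fun i hi j hj => hM i (by simp [hi]) j (by simp [hj]))
        (fun i hi => hp i (by simp [hi])) (fun i hi => ?_) (hp a (by simp))
      have hw := B.width_pos a
      have := B.width_pos i
      have hia := hmax i hi
      rcases hM i (by simp [hi]) a (by simp) (by grind) with h | h <;> lia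
    rw [Finset.sum_insert haM]
    have := hq a (by simp)
    lia

section Blocks

/-- The rectangles of one kind are those of one height on one edge. -/
def kind (B : EdgeFamily ι) (i : ι) : ℕ × Bool :=
  (B.height i, B.bottom i)

/-- The kinds that occur in `M`. -/
def kinds (B : EdgeFamily ι) (M : Finset ι) : Finset (ℕ × Bool) :=
  M.image B.kind

/-- All rectangles of `M` are of one kind and lie in an interval whose length is their total
width; if they do not overlap, they fill a sub-box. -/
def IsBlock (B : EdgeFamily ι) (x : ι → ℤ) (M : Finset ι) : Prop :=
  (∀ i ∈ M, ∀ j ∈ M, B.kind i = B.kind j) ∧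
    ∃ a, ∀ i ∈ M, a ≤ x i ∧ x i + B.width i ≤ a + ∑ j ∈ M, B.width j

/-- The rectangles of `M` can be coloured with `n` colours so that every colour class is a
block. -/
def Grouped (B : EdgeFamily ι) (x : ι → ℤ) (M : Finset ι) (n : ℕ) : Prop :=
  ∃ c : ι → ℕ, (∀ i ∈ M, c i < n) ∧ ∀ k, B.IsBlock x {i ∈ M | c i = k}

variable {M M₁ M₂ : Finset ι} {n n₁ n₂ : ℕ}

theorem IsBlock.congr (h : B.IsBlock x M) (hx : ∀ i ∈ M, x' i = x i) : B.IsBlock x' M := by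
  obtain ⟨hkind, a, ha⟩ := h
  refine ⟨hkind, a, fun i hi => ?_⟩
  rw [hx i hi]
  exact ha i hi

theorem IsBlock.reflect (h : B.IsBlock x M) : B.IsBlock (B.reflect x) M := by
  obtain ⟨hkind, a, ha⟩ := h
  refine ⟨hkind, -(a + ∑ j ∈ M, B.width j), fun i hi => ?_⟩
  have := ha i hi
  simp only [EdgeFamily.reflect]
  lia

theorem isBlock_of_subsingleton (hM : (M : Set ι).Subsingleton) : B.IsBlock x M := by
  refine ⟨fun i hi j hj => congrArg B.kind (hM hi hj), ?_⟩
  rcases hM.eq_empty_or_singleton with h | ⟨a, h⟩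
  · simp [Finset.coe_eq_empty.1 h]
  · exact ⟨x a, by simp [Finset.coe_eq_singleton.1 h]⟩

theorem grouped_empty : B.Grouped x ∅ n :=
  ⟨fun _ => 0, by simp, fun _ => isBlock_of_subsingleton (by simp)⟩

theorem Grouped.congr (h : B.Grouped x M n) (hx : ∀ i ∈ M, x' i = x i) :
    B.Grouped x' M n := by
  obtain ⟨c, hc, hblock⟩ := h
  exact ⟨c, hc, fun k => (hblock k).congr fun i hi => hx i (Finset.mem_of_mem_filter i hi)⟩

theorem Grouped.mono (h : B.Grouped x M n₁) (hn : n₁ ≤ n₂) : B.Grouped x M n₂ := by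
  obtain ⟨c, hc, hblock⟩ := h
  exact ⟨c, fun i hi => (hc i hi).trans_le hn, hblock⟩

theorem Grouped.union (h₁ : B.Grouped x M₁ n₁) (h₂ : B.Grouped x M₂ n₂)
    (hM : Disjoint M₁ M₂) : B.Grouped x (M₁ ∪ M₂) (n₁ + n₂) := by
  obtain ⟨c₁, hc₁, hblock₁⟩ := h₁
  obtain ⟨c₂, hc₂, hblock₂⟩ := h₂
  have hM₂ : ∀ i ∈ M₂, i ∉ M₁ := fun i hi hi' => Finset.disjoint_left.1 hM hi' hi
  refine ⟨fun i => if i ∈ M₁ then c₁ i else n₁ + c₂ i, fun i hi => ?_, fun k => ?_⟩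
  · grind
  · rcases lt_or_ge k n₁ with hk | hk
    · convert hblock₁ k using 1
      ext i
      grind
    · convert hblock₂ (k - n₁) using 1
      ext i
      grind

theorem grouped_of_subsingleton (hM : (M : Set ι).Subsingleton) : B.Grouped x M 1 :=
  ⟨fun _ => 0, by simp, fun _ => isBlock_of_subsingleton <|
    hM.anti (Finset.coe_subset.2 (Finset.filter_subset _ _))⟩

theorem grouped_of_isBlock_kind
    (h : ∀ i ∈ M, B.IsBlock x {j ∈ M | B.kind j = B.kind i}) :
    B.Grouped x M (B.kinds M).card := by
  obtain ⟨f, hf, hlt⟩ : ∃ f : ℕ × Bool → ℕ, Set.InjOn f (B.kinds M) ∧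
      ∀ a ∈ B.kinds M, f a < (B.kinds M).card := by
    refine ⟨fun a => if ha : a ∈ B.kinds M then (B.kinds M).equivFin ⟨a, ha⟩ else 0,
      fun a ha b hb hab => ?_, fun a ha => by simp [ha]⟩
    simp only [SetLike.mem_coe] at ha hb
    simpa [ha, hb, Fin.val_inj] using hab
  have hmem : ∀ i ∈ M, B.kind i ∈ B.kinds M := fun i hi => Finset.mem_image_of_mem _ hi
  refine ⟨f ∘ B.kind, fun i hi => hlt _ (hmem i hi), fun k => ?_⟩
  by_cases hk : ∃ i ∈ M, f (B.kind i) = k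
  · obtain ⟨i, hi, rfl⟩ := hk
    convert h i hi using 1
    exact Finset.filter_congr fun j hj => (hf.eq_iff (hmem j hj) (hmem i hi))
  · push Not at hk
    exact isBlock_of_subsingleton (by simp [Finset.filter_false_of_mem hk])

end Blocks

section SortedRows

/-- `pos` places the rectangles of `R`, without gaps, from `p` to the right in the order of
nonincreasing heights. -/
structure IsSorted (B : EdgeFamily ι) (R : Finset ι) (p : ℤ) (pos : ι → ℤ) : Prop where
  apart : ∀ i ∈ R, ∀ j ∈ R, i ≠ j → B.Apart pos i j
  le_pos : ∀ i ∈ R, p + ∑ j ∈ R with B.height i < B.height j, B.width j ≤ pos i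
  end_le : ∀ i ∈ R, pos i + B.width i ≤ p + ∑ j ∈ R with B.height i ≤ B.height j, B.width j

variable {R M N : Finset ι} {p : ℤ} {pos : ι → ℤ}

theorem sum_width_mono (h : M ⊆ N) : ∑ i ∈ M, B.width i ≤ ∑ i ∈ N, B.width i :=
  Finset.sum_le_sum_of_subset_of_nonneg h fun i _ _ => (B.width_pos i).le

theorem exists_isSorted (B : EdgeFamily ι) (R : Finset ι) (p : ℤ) :
    ∃ pos, B.IsSorted R p pos := by
  -- An arbitrary linear order breaks ties between rectangles of equal height.
  let _ : LinearOrder ι := IsWellOrder.linearOrder WellOrderingRel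
  let key : ι → ℕᵒᵈ ×ₗ ι := fun i => toLex (OrderDual.toDual (B.height i), i)
  have key_injective : key.Injective := fun i j hij => congrArg (fun a => (ofLex a).2) hij
  have key_lt : ∀ {i j}, B.height i < B.height j → key j < key i := fun h =>
    Prod.Lex.toLex_lt_toLex.2 (.inl h)
  have height_le : ∀ {i j}, key j ≤ key i → B.height i ≤ B.height j := fun h =>
    le_of_not_gt fun h' => (key_lt h').not_ge h
  let pos : ι → ℤ := fun i => p + ∑ j ∈ R with key j < key i, B.width j
  have end_eq : ∀ i ∈ R, pos i + B.width i = p + ∑ j ∈ R with key j ≤ key i, B.width j := by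
    intro i hi
    have : ({j ∈ R | key j ≤ key i} : Finset ι) = insert i {j ∈ R | key j < key i} := by
      ext j
      simp only [Finset.mem_filter, Finset.mem_insert, le_iff_lt_or_eq, key_injective.eq_iff]
      grind
    rw [this, Finset.sum_insert (by simp)]
    lia
  have end_le_of_lt : ∀ i ∈ R, ∀ j, key i < key j → pos i + B.width i ≤ pos j := by
    intro i hi j hij
    rw [end_eq i hi]
    exact add_le_add_right
      (sum_width_mono (Finset.monotone_filter_right R fun k _ hk => hk.trans_lt hij)) p
  refine ⟨pos, fun i hi j hj hij => ?_, fun i _ => ?_, fun i hi => ?_⟩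
  · exact (lt_or_gt_of_ne (key_injective.ne hij)).imp (end_le_of_lt i hi j) (end_le_of_lt j hj i)
  · exact add_le_add_right
      (sum_width_mono (Finset.monotone_filter_right R fun _ _ => key_lt)) p
  · rw [end_eq i hi]
    exact add_le_add_right
      (sum_width_mono (Finset.monotone_filter_right R fun _ _ => height_le)) p

theorem IsSorted.isBlock (h : B.IsSorted R p pos)
    (hR : ∀ i ∈ R, ∀ j ∈ R, B.bottom i = B.bottom j) (hi : i ∈ R) :
    B.IsBlock pos {j ∈ R | B.kind j = B.kind i} := by
  have hkind : ∀ j ∈ R, (B.kind j = B.kind i ↔ B.height j = B.height i) := fun j hj => by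
    simp [kind, hR j hj i hi]
  have hsplit : ∑ j ∈ R with B.height i ≤ B.height j, B.width j =
      ∑ j ∈ R with B.height i < B.height j, B.width j +
        ∑ j ∈ R with B.kind j = B.kind i, B.width j := by
    rw [← Finset.sum_union (Finset.disjoint_filter.2 fun j hj h₁ h₂ => by grind)]
    congr 1
    ext j
    grind
  refine ⟨fun j hj k hk => ?_, p + ∑ j ∈ R with B.height i < B.height j, B.width j,
    fun k hk => ?_⟩
  · exact (Finset.mem_filter.1 hj).2.trans (Finset.mem_filter.1 hk).2.symm
  · obtain ⟨hkR, hk⟩ := Finset.mem_filter.1 hk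
    have hle := h.le_pos k hkR
    have hend := h.end_le k hkR
    rw [(hkind k hkR).1 hk] at hle hend
    rw [add_assoc, ← hsplit]
    exact ⟨hle, hend⟩

theorem IsSorted.start_le (h : B.IsSorted R p pos) (hi : i ∈ R) : p ≤ pos i :=
  (le_add_of_nonneg_right (Finset.sum_nonneg fun j _ => (B.width_pos j).le)).trans (h.le_pos i hi)

/-- Sorting compresses: in any other arrangement to the right of `p` the rectangles that are at
least as high as `i` need at least as much room. -/
theorem IsSorted.end_le_of_forall (h : B.IsSorted R p pos)
    (hR : ∀ i ∈ R, ∀ j ∈ R, i ≠ j → B.Apart x i j) (hp : ∀ i ∈ R, p ≤ x i) {z : ℤ} (hi : i ∈ R)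
    (hz : ∀ j ∈ R, B.height i ≤ B.height j → x j + B.width j ≤ z) :
    pos i + B.width i ≤ z := by
  have hpz : p ≤ z := by
    have := hp i hi
    have := hz i hi le_rfl
    have := B.width_pos i
    lia
  refine (h.end_le i hi).trans (add_sum_width_le (x := x) ?_ ?_ ?_ hpz) <;> grind

end SortedRows

section Obstructions

/-- A rectangle is active in `Z` if some rectangle of `Z` clashes with it. -/
def Active (B : EdgeFamily ι) (Z : Finset ι) (i : ι) : Prop :=
  ∃ j ∈ Z, B.Clash i j

/-- A rectangle is dominant for `Z` if it clashes with every active rectangle of `Z` on the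
opposite edge. -/
def IsDominant (B : EdgeFamily ι) (Z : Finset ι) (i : ι) : Prop :=
  ∀ j ∈ Z, B.bottom j ≠ B.bottom i → B.Active Z j → B.Clash i j

/-- A rectangle crossing the left end of a strip that meets the rectangles `Z` does not obstruct
moving the rectangles on the edge `v` to the left end of the strip. -/
def Fits (B : EdgeFamily ι) (v : Bool) (Z : Finset ι) (e : ι) : Prop :=
  (B.bottom e = v ∧ B.IsDominant Z e) ∨ (B.bottom e ≠ v ∧ ¬B.Active Z e)

variable {Z Z' : Finset ι} {v : Bool}

theorem Active.mono (h : B.Active Z i) (hZ : Z ⊆ Z') : B.Active Z' i := by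
  obtain ⟨j, hj, hij⟩ := h
  exact ⟨j, hZ hj, hij⟩

theorem IsDominant.anti (h : B.IsDominant Z' i) (hZ : Z ⊆ Z') : B.IsDominant Z i :=
  fun j hj hij hact => h j (hZ hj) hij (hact.mono hZ)

theorem Fits.anti (h : B.Fits v Z' e) (hZ : Z ⊆ Z') : B.Fits v Z e :=
  h.imp (And.imp_right fun h => h.anti hZ) (And.imp_right (mt fun h => h.mono hZ))

theorem Conflict.of_height_le (h : B.Conflict i e) (hb : B.bottom j = B.bottom i)
    (hh : B.height i ≤ B.height j) : B.Conflict j e := by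
  refine h.imp hb.trans fun h => ⟨hb ▸ h.1, ?_⟩
  have := h.2
  lia

theorem conflict_of_not_fits (hi : B.bottom i = v) (hdom : B.IsDominant Z i) (he : e ∈ Z)
    (hfits : ¬B.Fits v Z e) : i ≠ e ∧ B.Conflict i e := by
  simp only [Fits, not_or, not_and, not_not] at hfits
  refine ⟨fun h => hfits.1 (h ▸ hi) (h ▸ hdom), ?_⟩
  by_cases hb : B.bottom e = v
  · exact .inl (hi.trans hb.symm)
  · exact .inr (hdom e he (hi ▸ hb) (hfits.2 hb))

end Obstructions

section Counting

/-- The heights of the active rectangles of `Z` on the bottom edge. -/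
noncomputable def activeHeights (B : EdgeFamily ι) (Z : Finset ι) : Finset ℕ :=
  {i ∈ Z | B.bottom i = true ∧ B.Active Z i}.image B.height

variable {Z Z' : Finset ι} {v : Bool}

theorem kinds_mono (hZ : Z ⊆ Z') : B.kinds Z ⊆ B.kinds Z' :=
  Finset.image_subset_image hZ

theorem activeHeights_mono (hZ : Z ⊆ Z') : B.activeHeights Z ⊆ B.activeHeights Z' := by
  refine Finset.image_subset_image fun i hi => ?_
  simp only [Finset.mem_filter] at hi ⊢
  exact ⟨hZ hi.1, hi.2.1, hi.2.2.mono hZ⟩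

theorem Clash.bottom_eq (h : B.Clash i j) (hi : B.bottom i ≠ v) : B.bottom j = v :=
  (Bool.eq_not_of_ne h.1.symm).trans (Bool.eq_not_of_ne hi.symm).symm

theorem Clash.of_height_le (h : B.Clash i j) (hb : B.bottom e = B.bottom j)
    (hh : B.height j ≤ B.height e) : B.Clash i e :=
  ⟨hb ▸ h.1, h.2.trans_le (by gcongr)⟩

theorem IsDominant.of_kind_eq (h : B.IsDominant Z i) (hkind : B.kind j = B.kind i) :
    B.IsDominant Z j := by
  have hheight : B.height j = B.height i := congrArg Prod.fst hkind
  have hbottom : B.bottom j = B.bottom i := congrArg Prod.snd hkind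
  intro k hk hkj hact
  exact ((h k hk (hbottom ▸ hkj) hact).symm.of_height_le hbottom hheight.ge).symm

theorem fits_of_not_active (hZ : ∀ i ∈ Z, ¬B.Active Z i) (he : e ∈ Z) : B.Fits v Z e := by
  by_cases hv : B.bottom e = v
  · exact .inl ⟨hv, fun j hj _ hact => absurd hact (hZ j hj)⟩
  · exact .inr ⟨hv, hZ e he⟩

theorem exists_active_bottom_eq (hZ : ∃ i ∈ Z, B.Active Z i) (v : Bool) :
    ∃ i ∈ Z, B.bottom i = v ∧ B.Active Z i := by
  obtain ⟨i, hi, j, hj, hij⟩ := hZ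
  by_cases hv : B.bottom i = v
  · exact ⟨i, hi, hv, j, hj, hij⟩
  · exact ⟨j, hj, hij.bottom_eq hv, i, hi, hij.symm⟩

theorem exists_isDominant (hZ : ∃ i ∈ Z, B.Active Z i) (v : Bool) :
    ∃ t ∈ Z, B.bottom t = v ∧ B.Active Z t ∧ B.IsDominant Z t := by
  obtain ⟨i, hi, hiv, hact⟩ := exists_active_bottom_eq hZ v
  obtain ⟨t, ht, hmax⟩ :=
    {i ∈ Z | B.bottom i = v ∧ B.Active Z i}.exists_max_image B.height
      ⟨i, Finset.mem_filter.2 ⟨hi, hiv, hact⟩⟩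
  obtain ⟨htZ, htv, ht_act⟩ := Finset.mem_filter.1 ht
  refine ⟨t, htZ, htv, ht_act, fun j hj hjt ⟨m, hm, hjm⟩ => ?_⟩
  have hmv : B.bottom m = v := hjm.bottom_eq (htv ▸ hjt)
  exact (hjm.of_height_le (htv.trans hmv.symm)
    (hmax m (Finset.mem_filter.2 ⟨hm, hmv, j, hj, hjm.symm⟩))).symm

theorem card_kinds_lt (hZ : ∃ i ∈ Z, B.Active Z i) (hZ' : Z' ⊆ Z)
    (h : ∀ i ∈ Z', ¬(B.bottom i = v ∧ B.IsDominant Z i)) :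
    (B.kinds Z').card < (B.kinds Z).card := by
  obtain ⟨t, ht, htv, -, hdom⟩ := exists_isDominant hZ v
  refine Finset.card_lt_card (Finset.ssubset_iff_of_subset (kinds_mono hZ') |>.2
    ⟨B.kind t, Finset.mem_image_of_mem _ ht, fun hmem => ?_⟩)
  obtain ⟨i, hi, hit⟩ := Finset.mem_image.1 hmem
  exact h i hi ⟨(congrArg Prod.snd hit).trans htv, hdom.of_kind_eq hit⟩

/-- The lost height is that of a highest active rectangle if `v = true`; if `v = false`, it is
the least active height on the bottom, since everything clashing with it is dominant. -/
theorem card_activeHeights_lt (hZ : ∃ i ∈ Z, B.Active Z i) (hZ' : Z' ⊆ Z)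
    (h : ∀ i ∈ Z', ¬(B.bottom i = v ∧ B.IsDominant Z i)) :
    (B.activeHeights Z').card < (B.activeHeights Z).card := by
  refine Finset.card_lt_card
    (Finset.ssubset_iff_of_subset (activeHeights_mono hZ') |>.2 ?_)
  have mem_activeHeights : ∀ {Y : Finset ι} {a : ℕ}, a ∈ B.activeHeights Y ↔
      ∃ i ∈ Y, (B.bottom i = true ∧ B.Active Y i) ∧ B.height i = a := by
    simp [activeHeights, and_assoc]
  cases v with
  | true =>
    obtain ⟨t, ht, htv, hact, hdom⟩ := exists_isDominant hZ true
    refine ⟨B.height t, mem_activeHeights.2 ⟨t, ht, ⟨htv, hact⟩, rfl⟩, fun hmem => ?_⟩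
    obtain ⟨i, hi, ⟨hiv, -⟩, hit⟩ := mem_activeHeights.1 hmem
    exact h i hi ⟨hiv, hdom.of_kind_eq (Prod.ext hit (hiv.trans htv.symm))⟩
  | false =>
    obtain ⟨i, hi, hiv, hact⟩ := exists_active_bottom_eq hZ true
    have hi_mem := mem_activeHeights.2 ⟨i, hi, ⟨hiv, hact⟩, rfl⟩
    obtain ⟨a, ha, hmin⟩ := (B.activeHeights Z).exists_min_image id ⟨_, hi_mem⟩
    refine ⟨a, ha, fun hmem => ?_⟩
    obtain ⟨b, -, ⟨hbv, j, hj, hbj⟩, rfl⟩ := mem_activeHeights.1 hmem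
    have hjv : B.bottom j = false := hbj.bottom_eq (by simp [hbv])
    refine h j hj ⟨hjv, fun k hk hkj hact => ?_⟩
    have hkv : B.bottom k = true := by simpa [hjv] using hkj
    exact hbj.symm.of_height_le (hkv.trans hbv.symm)
      (hmin _ (mem_activeHeights.2 ⟨k, hk, ⟨hkv, hact⟩, rfl⟩))

variable {k₀ Γ₀ N : ℕ}

theorem three_pow_mul_le (hk : k₀ ≤ Γ₀) (hN : N ≤ k₀ + Γ₀) : 3 ^ k₀ * N ≤ 6 ^ k₀ * Γ₀ := by
  have hk' : k₀ ≤ k₀ * Γ₀ := by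
    rcases k₀.eq_zero_or_pos with rfl | h
    · simp
    · exact Nat.le_mul_of_pos_right _ (h.trans_le hk)
  calc 3 ^ k₀ * N ≤ 3 ^ k₀ * ((k₀ + 1) * Γ₀) := by gcongr; lia
    _ ≤ 3 ^ k₀ * (2 ^ k₀ * Γ₀) := by gcongr; exact Nat.lt_two_pow_self
    _ = 6 ^ k₀ * Γ₀ := by rw [← mul_assoc, ← mul_pow]; norm_num

theorem card_kinds_le (M : Finset ι) : (B.kinds M).card ≤
    ({i ∈ M | B.bottom i = true}.image B.height).card + (M.image B.height).card := by
  have hsub : B.kinds M ⊆ ({i ∈ M | B.bottom i = true}.image B.height).image (·, true) ∪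
      (M.image B.height).image (·, false) := by
    intro a ha
    obtain ⟨i, hi, rfl⟩ := Finset.mem_image.1 ha
    cases hv : B.bottom i <;>
      simp only [kind, hv, Finset.mem_union, Finset.mem_image, Finset.mem_filter] <;> grind
  exact (Finset.card_le_card hsub).trans ((Finset.card_union_le _ _).trans
    (add_le_add Finset.card_image_le Finset.card_image_le))

theorem card_activeHeights_le (M : Finset ι) : (B.activeHeights M).card ≤
    ({i ∈ M | B.bottom i = true}.image B.height).card :=
  Finset.card_le_card (Finset.image_subset_image
    (Finset.monotone_filter_right M fun _ _ h => h.1))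

end Counting

section Borders

variable [Finite ι] {L R : ℤ}

theorem exists_le_iff_forall_crosses (B : EdgeFamily ι) (v : Bool) (x : ι → ℤ) (s : ℤ) :
    ∃ p, ∀ z, p ≤ z ↔
      s ≤ z ∧ ∀ e, B.Crosses x s e → B.bottom e = v → x e + B.width e ≤ z := by
  have := Fintype.ofFinite ι
  refine ⟨Finset.fold max s (fun e => x e + B.width e) {e | B.Crosses x s e ∧ B.bottom e = v},
    fun z => ?_⟩
  simp [Finset.fold_max_le]

theorem exists_left_border (hx : B.IsPlacement x) (hL : ∀ i, L ≤ x i) (hne : ∃ i, x i ≠ L) :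
    ∃ l, L ≤ l ∧ {i | B.Crosses x l i}.Subsingleton ∧ ∀ i, x i ≠ L ↔ l ≤ x i := by
  obtain ⟨i, hi⟩ := hne
  obtain ⟨e, he, hmin⟩ := Set.exists_min_image {i | x i ≠ L} x (Set.toFinite _) ⟨i, hi⟩
  refine ⟨x e, hL e, subsingleton_crosses_start hx e, fun i => ⟨hmin i, fun hi h => ?_⟩⟩
  exact he ((hi.trans_eq h).antisymm (hL e))

theorem exists_right_border (hx : B.IsPlacement x) (hR : ∀ i, x i + B.width i ≤ R)
    (hne : ∃ i, x i + B.width i ≠ R) :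
    ∃ r, r ≤ R ∧ {i | B.Crosses x r i}.Subsingleton ∧
      ∀ i, x i + B.width i ≠ R ↔ x i + B.width i ≤ r := by
  obtain ⟨l, hl⟩ := exists_left_border (L := -R) hx.reflect
    (fun i => neg_le_neg (hR i)) (by simpa only [reflect, ne_eq, neg_inj] using hne)
  obtain ⟨r, rfl⟩ : ∃ r, l = -r := ⟨-l, (neg_neg l).symm⟩
  simp only [crosses_reflect] at hl
  simp only [reflect, neg_le_neg_iff, ne_eq, neg_inj] at hl
  exact ⟨r, hl⟩

end Borders

section Strips

variable [Fintype ι]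

/-- The rectangles lying in the vertical strip `[l, r]`. -/
def inside (B : EdgeFamily ι) (x : ι → ℤ) (l r : ℤ) : Finset ι :=
  {i | l ≤ x i ∧ x i + B.width i ≤ r}

/-- The rectangles whose interiors meet the vertical strip `[l, r]`. -/
def meeting (B : EdgeFamily ι) (x : ι → ℤ) (l r : ℤ) : Finset ι :=
  {i | x i < r ∧ l < x i + B.width i}

theorem mem_inside : i ∈ B.inside x l r ↔ l ≤ x i ∧ x i + B.width i ≤ r := by
  simp [inside]

theorem mem_meeting : i ∈ B.meeting x l r ↔ x i < r ∧ l < x i + B.width i := by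
  simp [meeting]

theorem inside_subset_meeting : B.inside x l r ⊆ B.meeting x l r := by
  intro i hi
  have := B.width_pos i
  rw [mem_inside] at hi
  rw [mem_meeting]
  lia

theorem meeting_mono {l' r' : ℤ} (hl : l ≤ l') (hr : r' ≤ r) :
    B.meeting x l' r' ⊆ B.meeting x l r := by
  intro i hi
  rw [mem_meeting] at hi ⊢
  lia

theorem inside_reflect : B.inside (B.reflect x) (-r) (-l) = B.inside x l r := by
  ext i
  simp only [mem_inside, reflect]
  lia

theorem meeting_reflect : B.meeting (B.reflect x) (-r) (-l) = B.meeting x l r := by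
  ext i
  simp only [mem_meeting, reflect]
  lia

section Cuts

variable {P Q : ι → Prop}

theorem exists_cut_left (hx : B.IsPlacement x) (hlr : l ≤ r)
    (hl : {i | B.Crosses x l i}.Subsingleton) (hr : {i | B.Crosses x r i}.Subsingleton)
    (hPQ : ∀ i ∈ B.meeting x l r, ∀ j ∈ B.meeting x l r, P i → ¬Q j → i ≠ j ∧ B.Conflict i j) :
    ∃ s, l ≤ s ∧ s ≤ r ∧ {i | B.Crosses x s i}.Subsingleton ∧
      (l < s → ∀ i ∈ B.meeting x l s, ¬P i) ∧ (s = r ∨ ∀ e, B.Crosses x s e → Q e) := by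
  let cuts : Finset ℤ := {s ∈ Finset.Icc l r | {i | B.Crosses x s i}.Subsingleton ∧
    (l < s → ∀ i ∈ B.meeting x l s, ¬P i)}
  have hcuts : ∀ {s}, s ∈ cuts ↔ (l ≤ s ∧ s ≤ r) ∧ {i | B.Crosses x s i}.Subsingleton ∧
      (l < s → ∀ i ∈ B.meeting x l s, ¬P i) := by
    simp [cuts]
  obtain ⟨s, hs, hmax⟩ := cuts.exists_max_image id ⟨l, hcuts.2 ⟨⟨le_rfl, hlr⟩, hl, by simp⟩⟩
  obtain ⟨⟨hls, hsr⟩, hsub, hP⟩ := hcuts.1 hs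
  refine ⟨s, hls, hsr, hsub, hP, ?_⟩
  by_contra! hcross
  obtain ⟨hne, e, ⟨hes, hse⟩, hQ⟩ := hcross
  -- The cut can be moved to the right until the end of `e`.
  have hlt : s < min (x e + B.width e) r := by lia
  refine (hmax _ (hcuts.2 ⟨⟨hls.trans hlt.le, min_le_right _ _⟩, ?_, fun _ i hi hPi => ?_⟩)).not_gt
    hlt
  · rcases min_choice (x e + B.width e) r with h | h <;> rw [h]
    · exact subsingleton_crosses_end hx e
    · exact hr
  · have he : e ∈ B.meeting x l r := mem_meeting.2 ⟨by lia, by lia⟩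
    obtain ⟨hie, hconf⟩ := hPQ i (meeting_mono le_rfl (min_le_right _ _) hi) e he hPi hQ
    rw [mem_meeting] at hi
    have := B.width_pos i
    rcases hx hie hconf with h | h
    · exact hP (by lia) i (mem_meeting.2 ⟨by lia, hi.2⟩) hPi
    · lia

theorem exists_cut_right (hx : B.IsPlacement x) (hlr : l ≤ r)
    (hl : {i | B.Crosses x l i}.Subsingleton) (hr : {i | B.Crosses x r i}.Subsingleton)
    (hPQ : ∀ i ∈ B.meeting x l r, ∀ j ∈ B.meeting x l r, P i → ¬Q j → i ≠ j ∧ B.Conflict i j) :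
    ∃ u, l ≤ u ∧ u ≤ r ∧ {i | B.Crosses x u i}.Subsingleton ∧
      (u < r → ∀ i ∈ B.meeting x u r, ¬P i) ∧ (u = l ∨ ∀ e, B.Crosses x u e → Q e) := by
  obtain ⟨s, hs⟩ := exists_cut_left (l := -r) (r := -l) (P := P) (Q := Q) hx.reflect
    (neg_le_neg hlr) (by simpa only [crosses_reflect]) (by simpa only [crosses_reflect])
    (by simpa only [meeting_reflect])
  obtain ⟨u, rfl⟩ : ∃ u, s = -u := ⟨-s, (neg_neg s).symm⟩
  simp only [crosses_reflect, meeting_reflect, neg_le_neg_iff, neg_lt_neg_iff, neg_inj] at hs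
  obtain ⟨hru, hul, h⟩ := hs
  exact ⟨u, hul, hru, h⟩

end Cuts

section Rearrangeable

/-- The rectangles lying in the strip `[l, r]` can be rearranged within this strip so that they
form `n` blocks, all other rectangles keeping their positions. -/
def Rearrangeable (B : EdgeFamily ι) (x : ι → ℤ) (l r : ℤ) (n : ℕ) : Prop :=
  ∃ x', (∀ i ∉ B.inside x l r, x' i = x i) ∧
    (∀ i ∈ B.inside x l r, l ≤ x' i ∧ x' i + B.width i ≤ r) ∧
    B.IsPlacement x' ∧ B.Grouped x' (B.inside x l r) n

variable {n n₁ n₂ : ℕ}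

theorem Rearrangeable.mono (h : B.Rearrangeable x l r n₁) (hn : n₁ ≤ n₂) :
    B.Rearrangeable x l r n₂ := by
  obtain ⟨x', hfix, hin, hx', hgrouped⟩ := h
  exact ⟨x', hfix, hin, hx', hgrouped.mono hn⟩

theorem rearrangeable_self (hx : B.IsPlacement x) : B.Rearrangeable x l l 0 := by
  have hempty : B.inside x l l = ∅ := by
    ext i
    have := B.width_pos i
    simp only [mem_inside, Finset.notMem_empty, iff_false]
    lia
  refine ⟨x, fun _ _ => rfl, by simp [hempty], hx, ?_⟩
  rw [hempty]
  exact grouped_empty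

theorem inside_eq_of_agree (h : ∀ i ∈ B.meeting x l r, x' i = x i)
    (h' : ∀ i ∈ B.meeting x' l r, x' i = x i) : B.inside x' l r = B.inside x l r := by
  ext i
  constructor <;> intro hi
  · simpa only [mem_inside, h' i (inside_subset_meeting hi)] using hi
  · simpa only [mem_inside, h i (inside_subset_meeting hi)] using hi

theorem Rearrangeable.congr (hx' : B.IsPlacement x')
    (h : B.Rearrangeable x l r n) (hagree : ∀ i ∈ B.meeting x l r, x' i = x i)
    (hagree' : ∀ i ∈ B.meeting x' l r, x' i = x i) : B.Rearrangeable x' l r n := by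
  have hinside := inside_eq_of_agree hagree hagree'
  obtain ⟨z, hfix, hin, hz, hgrouped⟩ := h
  simp only [Rearrangeable, hinside]
  let z' := fun i => if i ∈ B.inside x l r then z i else x' i
  have hz'_in : ∀ i ∈ B.inside x l r, z' i = z i := fun i hi => if_pos hi
  have hz'_out : ∀ i ∉ B.inside x l r, z' i = x' i := fun i hi => if_neg hi
  have apart_of_mixed : ∀ i j, i ∈ B.inside x l r → j ∉ B.inside x l r → B.Conflict i j →
      B.Apart z' i j := by
    intro i j hi hj hc
    by_cases hmeet : j ∈ B.meeting x' l r
    · refine (hz (by grind) hc).congr (hz'_in i hi) ?_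
      rw [hz'_out j hj, hagree' j hmeet, hfix j hj]
    · have := hin i hi
      simp only [Apart, hz'_in i hi, hz'_out j hj]
      rw [mem_meeting] at hmeet
      lia
  refine ⟨z', hz'_out, fun i hi => by simpa only [hz'_in i hi] using hin i hi, ?_,
    hgrouped.congr hz'_in⟩
  intro i j hij hc
  by_cases hi : i ∈ B.inside x l r <;> by_cases hj : j ∈ B.inside x l r
  · exact (hz hij hc).congr (hz'_in i hi) (hz'_in j hj)
  · exact apart_of_mixed i j hi hj hc
  · exact (apart_of_mixed j i hj hi hc.symm).symm
  · exact (hx' hij hc).congr (hz'_out i hi) (hz'_out j hj)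

theorem inside_eq_union (hls : l ≤ s) (hsr : s ≤ r) :
    B.inside x l r =
      (B.inside x l s ∪ B.inside x s r) ∪ {i ∈ B.inside x l r | B.Crosses x s i} := by
  ext i
  have := B.width_pos i
  simp only [Finset.mem_union, Finset.mem_filter, mem_inside]
  simp only [Crosses]
  lia

/-- The rectangle crossing the line between the two strips forms a block of its own. -/
theorem Rearrangeable.append (h₁ : B.Rearrangeable x l s n₁) (h₂ : B.Rearrangeable x s r n₂)
    (hs : {i | B.Crosses x s i}.Subsingleton) (hls : l ≤ s) (hsr : s ≤ r) :
    B.Rearrangeable x l r (n₁ + n₂ + 1) := by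
  obtain ⟨x₁, hfix₁, hin₁, hx₁, hgrouped₁⟩ := h₁
  have hagree : ∀ i ∈ B.meeting x s r, x₁ i = x i := fun i hi =>
    hfix₁ i (by rw [mem_meeting] at hi; rw [mem_inside]; lia)
  have hagree' : ∀ i ∈ B.meeting x₁ s r, x₁ i = x i := fun i hi =>
    hfix₁ i fun hi' => by have := hin₁ i hi'; rw [mem_meeting] at hi; lia
  have hinside := inside_eq_of_agree hagree hagree'
  obtain ⟨x₂, hfix₂, hin₂, hx₂, hgrouped₂⟩ := h₂.congr hx₁ hagree hagree'
  rw [hinside] at hfix₂ hin₂ hgrouped₂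
  have hdisj : Disjoint (B.inside x l s) (B.inside x s r) := by
    refine Finset.disjoint_left.2 fun i hi hi' => ?_
    have := B.width_pos i
    rw [mem_inside] at hi hi'
    lia
  have hleft : ∀ i ∈ B.inside x l s, x₂ i = x₁ i := fun i hi =>
    hfix₂ i (Finset.disjoint_left.1 hdisj hi)
  have hsplit := inside_eq_union (B := B) (x := x) hls hsr
  refine ⟨x₂, fun i hi => ?_, fun i hi => ?_, hx₂, ?_⟩
  · rw [hsplit] at hi
    simp only [Finset.mem_union, not_or] at hi
    rw [hfix₂ i hi.1.2, hfix₁ i hi.1.1]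
  · by_cases hi₁ : i ∈ B.inside x l s
    · have := hin₁ i hi₁
      rw [hleft i hi₁]
      lia
    · by_cases hi₂ : i ∈ B.inside x s r
      · have := hin₂ i hi₂
        lia
      · rw [hfix₂ i hi₂, hfix₁ i hi₁]
        exact mem_inside.1 hi
  · rw [hsplit]
    refine ((hgrouped₁.congr hleft).union hgrouped₂ hdisj).union
      (grouped_of_subsingleton (hs.anti fun i hi => (Finset.mem_filter.1 hi).2)) ?_
    refine Finset.disjoint_left.2 fun i hi hi' => ?_
    simp only [Finset.mem_union, Finset.mem_filter, mem_inside] at hi hi'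
    obtain ⟨-, hlt, hgt⟩ := hi'
    lia

end Rearrangeable

section Flush

variable {v : Bool} {p u : ℤ} {pos : ι → ℤ}

/-- The rectangles on the edge `v` lying in the vertical strip `[l, r]`. -/
def row (B : EdgeFamily ι) (v : Bool) (x : ι → ℤ) (l r : ℤ) : Finset ι :=
  {i ∈ B.inside x l r | B.bottom i = v}

/-- `pos` sorts the rectangles on the edge `v` in the strip `[s, u]`, starting from an abscissa
`p` which bounds every rectangle of the strip in conflict with them on the left, without
interfering with the rectangles outside. -/
structure IsFlush (B : EdgeFamily ι) (v : Bool) (x : ι → ℤ) (s u p : ℤ) (pos : ι → ℤ) :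
    Prop where
  isSorted : B.IsSorted (B.row v x s u) p pos
  start_le : ∀ i ∈ B.inside x s u, ∀ j ∈ B.row v x s u, B.Conflict i j → p ≤ x i
  le_pos : ∀ j ∈ B.row v x s u, s ≤ pos j
  end_le : ∀ j ∈ B.row v x s u, pos j + B.width j ≤ u
  apart : ∀ j ∈ B.row v x s u, ∀ i ∉ B.inside x s u, B.Conflict j i →
    pos j + B.width j ≤ x i ∨ x i + B.width i ≤ pos j

theorem mem_row : i ∈ B.row v x l r ↔ i ∈ B.inside x l r ∧ B.bottom i = v := by
  simp [row]

theorem row_reflect : B.row v (B.reflect x) (-r) (-l) = B.row v x l r := by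
  simp only [row, inside_reflect]

theorem IsPlacement.apart_row (hx : B.IsPlacement x) :
    ∀ i ∈ B.row v x l r, ∀ j ∈ B.row v x l r, i ≠ j → B.Apart x i j :=
  fun _ hi _ hj hij => hx hij (.inl ((mem_row.1 hi).2.trans (mem_row.1 hj).2.symm))

theorem start_le_of_fits (hx : B.IsPlacement x)
    (hs : ∀ e, B.Crosses x s e → B.Fits v (B.meeting x s u) e)
    (hp : ∀ z, p ≤ z ↔ s ≤ z ∧ ∀ e, B.Crosses x s e → B.bottom e = v → x e + B.width e ≤ z)
    (hi : i ∈ B.inside x s u) (hj : j ∈ B.row v x s u) (hij : B.Conflict i j) : p ≤ x i := by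
  have hsi := (mem_inside.1 hi).1
  obtain ⟨hj, hjv⟩ := mem_row.1 hj
  refine (hp _).2 ⟨hsi, fun e he hev => end_le_of_crosses hx he hsi ?_⟩
  rcases hij with hij | hij
  · exact .inl (hij.trans (hjv.trans hev.symm))
  · rcases hs e he with ⟨-, hdom⟩ | ⟨hev', -⟩
    · exact .inr (hdom i (inside_subset_meeting hi) (by rw [hev, ← hjv]; exact hij.1)
        ⟨j, inside_subset_meeting hj, hij⟩).symm
    · exact absurd hev hev'

/-- A rectangle crossing `s` lies on the edge `v` to the left of `p` or clashes with nothing in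
the strip; a rectangle starting further to the right stays clear because sorting compresses. -/
theorem IsSorted.apart_of_notMem_inside (hsorted : B.IsSorted (B.row v x s u) p pos)
    (hx : B.IsPlacement x)
    (hs : ∀ e, B.Crosses x s e → B.Fits v (B.meeting x s u) e)
    (hp : ∀ z, p ≤ z ↔ s ≤ z ∧ ∀ e, B.Crosses x s e → B.bottom e = v → x e + B.width e ≤ z)
    (hstart : ∀ i ∈ B.row v x s u, p ≤ x i)
    (hend : ∀ j ∈ B.row v x s u, pos j + B.width j ≤ u)
    (hj : j ∈ B.row v x s u) (hi : i ∉ B.inside x s u) (hc : B.Conflict j i) :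
    pos j + B.width j ≤ x i ∨ x i + B.width i ≤ pos j := by
  have hpj := hsorted.start_le hj
  have hju := hend j hj
  have hsj := ((hp _).1 hpj).1
  obtain ⟨hj_inside, hjv⟩ := mem_row.1 hj
  rw [mem_inside] at hi
  by_cases hcross : B.Crosses x s i
  · rcases hs i hcross with ⟨hiv, -⟩ | ⟨hiv, hinactive⟩
    · exact .inr (((hp _).1 hpj).2 i hcross hiv)
    · rcases hc with hc | hc
      · exact absurd (hc.symm.trans hjv) hiv
      · exact absurd ⟨j, inside_subset_meeting hj_inside, hc.symm⟩ hinactive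
  · simp only [Crosses] at hcross
    by_cases hcross' : B.Crosses x u i
    · refine .inl (hsorted.end_le_of_forall hx.apart_row hstart hj fun k hk hjk => ?_)
      obtain ⟨hk, hkv⟩ := mem_row.1 hk
      exact le_start_of_crosses hx hcross' (mem_inside.1 hk).2
        (hc.of_height_le (hkv.trans hjv.symm) hjk)
    · simp only [Crosses] at hcross'
      have := B.width_pos j
      lia

theorem exists_isFlush (hx : B.IsPlacement x)
    (hs : ∀ e, B.Crosses x s e → B.Fits v (B.meeting x s u) e) :
    ∃ p pos, B.IsFlush v x s u p pos := by
  obtain ⟨p, hp⟩ := exists_le_iff_forall_crosses B v x s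
  obtain ⟨pos, hpos⟩ := exists_isSorted B (B.row v x s u) p
  have hconf : ∀ i ∈ B.inside x s u, ∀ j ∈ B.row v x s u, B.Conflict i j → p ≤ x i :=
    fun i hi j hj => start_le_of_fits hx hs hp hi hj
  have hstart : ∀ i ∈ B.row v x s u, p ≤ x i := fun i hi =>
    hconf i (mem_row.1 hi).1 i hi (.inl rfl)
  have hend : ∀ j ∈ B.row v x s u, pos j + B.width j ≤ u := fun j hj =>
    hpos.end_le_of_forall hx.apart_row hstart hj fun k hk _ =>
      (mem_inside.1 (mem_row.1 hk).1).2
  exact ⟨p, pos, hpos, hconf, fun j hj => ((hp _).1 (hpos.start_le hj)).1, hend,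
    fun j hj i hi => hpos.apart_of_notMem_inside hx hs hp hstart hend hj hi⟩

end Flush

section Middle

variable {u p q : ℤ} {a b : ι → ℤ}

theorem IsFlush.add_sum_width_le (hx : B.IsPlacement x) (ha : B.IsFlush false x s u p a)
    (hb : B.IsFlush true (B.reflect x) (-u) (-s) q b) (hi : i ∈ B.row false x s u)
    (hj : j ∈ B.row true x s u) {M : Finset ι} (hiM : i ∈ M) (hM : M ⊆ B.inside x s u)
    (hMi : ∀ k ∈ M, B.Conflict k i) (hMj : ∀ k ∈ M, B.Conflict k j)
    (hMM : ∀ k ∈ M, ∀ m ∈ M, B.Conflict k m) : p + ∑ k ∈ M, B.width k ≤ -q := by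
  have hb_start := hb.start_le
  simp only [inside_reflect, row_reflect] at hb_start
  have hstart : ∀ k ∈ M, p ≤ x k := fun k hk => ha.start_le k (hM hk) i hi (hMi k hk)
  have hend : ∀ k ∈ M, x k + B.width k ≤ -q := fun k hk =>
    le_neg.1 (hb_start k (hM hk) j hj (hMj k hk))
  refine EdgeFamily.add_sum_width_le (fun k hk m hm hkm => hx hkm (hMM k hk m hm)) hstart hend ?_
  have := B.width_pos i
  have := hstart i hiM
  have := hend i hiM
  lia

/-- The rectangles on the two edges that are at least as high as the clashing rectangles `i` and
`j` clash with each other, hence they fitted between the starting points `p` and `-q` of the two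
rows. -/
theorem IsFlush.end_le_reflect (hx : B.IsPlacement x) (ha : B.IsFlush false x s u p a)
    (hb : B.IsFlush true (B.reflect x) (-u) (-s) q b) (hi : i ∈ B.row false x s u)
    (hj : j ∈ B.row true x s u) (hij : B.Clash i j) :
    a i + B.width i ≤ B.reflect b j := by
  let tops : Finset ι := {k ∈ B.row false x s u | B.height i ≤ B.height k}
  let bottoms : Finset ι := {k ∈ B.row true x s u | B.height j ≤ B.height k}
  have conflict_of_mem : ∀ {m}, B.Conflict i m → B.Conflict j m → ∀ k ∈ tops ∪ bottoms,
      B.Conflict k m := by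
    intro m him hjm k hk
    rcases Finset.mem_union.1 hk with hk | hk <;> obtain ⟨hk, hle⟩ := Finset.mem_filter.1 hk
    · exact him.of_height_le ((mem_row.1 hk).2.trans (mem_row.1 hi).2.symm) hle
    · exact hjm.of_height_le ((mem_row.1 hk).2.trans (mem_row.1 hj).2.symm) hle
  have hMi := conflict_of_mem (.inl rfl) (.inr hij.symm)
  have hMj := conflict_of_mem (.inr hij) (.inl rfl)
  have hM : tops ∪ bottoms ⊆ B.inside x s u :=
    Finset.union_subset ((Finset.filter_subset _ _).trans (Finset.filter_subset _ _))
      ((Finset.filter_subset _ _).trans (Finset.filter_subset _ _))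
  have hsum := ha.add_sum_width_le hx hb hi hj (by simp [tops, hi]) hM hMi hMj
    fun k hk m hm => conflict_of_mem (hMi m hm).symm (hMj m hm).symm k hk
  have hdisj : Disjoint tops bottoms := by
    refine Finset.disjoint_left.2 fun k hk hk' => ?_
    simp only [tops, bottoms, Finset.mem_filter, mem_row] at hk hk'
    exact Bool.false_ne_true (hk.1.2.symm.trans hk'.1.2)
  rw [Finset.sum_union hdisj] at hsum
  have hai := ha.isSorted.end_le i hi
  have hbj := hb.isSorted.end_le j (by rwa [row_reflect])
  rw [row_reflect] at hbj
  simp only [reflect]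
  lia

theorem disjoint_row : Disjoint (B.row false x s u) (B.row true x s u) :=
  Finset.disjoint_left.2 fun _ hi hi' =>
    Bool.false_ne_true ((mem_row.1 hi).2.symm.trans (mem_row.1 hi').2)

theorem inside_eq_row_union_row : B.inside x s u = B.row false x s u ∪ B.row true x s u := by
  ext i
  simp only [Finset.mem_union, mem_row]
  cases B.bottom i <;> simp

theorem IsFlush.apart_of_mem_inside (hx : B.IsPlacement x) (ha : B.IsFlush false x s u p a)
    (hb : B.IsFlush true (B.reflect x) (-u) (-s) q b)
    (htop : ∀ i ∈ B.row false x s u, x' i = a i)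
    (hbottom : ∀ i ∈ B.row true x s u, x' i = B.reflect b i) (hi : i ∈ B.inside x s u)
    (hj : j ∈ B.inside x s u) (hij : i ≠ j) (hc : B.Conflict i j) : B.Apart x' i j := by
  have apart_of_opposite : ∀ i ∈ B.row false x s u, ∀ j ∈ B.row true x s u, B.Conflict i j →
      B.Apart x' i j := fun i hi j hj hc => by
    have hclash : B.Clash i j := hc.resolve_left fun h =>
      Bool.false_ne_true ((mem_row.1 hi).2.symm.trans (h.trans (mem_row.1 hj).2))
    refine .inl ?_
    rw [htop i hi, hbottom j hj]
    exact ha.end_le_reflect hx hb hi hj hclash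
  have hb_apart := hb.isSorted.apart
  rw [row_reflect] at hb_apart
  rw [inside_eq_row_union_row, Finset.mem_union] at hi hj
  rcases hi with hi | hi <;> rcases hj with hj | hj
  · exact (ha.isSorted.apart i hi j hj hij).congr (htop i hi) (htop j hj)
  · exact apart_of_opposite i hi j hj hc
  · exact (apart_of_opposite j hj i hi hc.symm).symm
  · exact (apart_reflect.2 (hb_apart i hi j hj hij)).congr (hbottom i hi) (hbottom j hj)

theorem IsFlush.isPlacement (hx : B.IsPlacement x) (ha : B.IsFlush false x s u p a)
    (hb : B.IsFlush true (B.reflect x) (-u) (-s) q b)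
    (htop : ∀ i ∈ B.row false x s u, x' i = a i)
    (hbottom : ∀ i ∈ B.row true x s u, x' i = B.reflect b i)
    (hout : ∀ i ∉ B.inside x s u, x' i = x i) : B.IsPlacement x' := by
  have hb_apart := hb.apart
  rw [row_reflect, inside_reflect] at hb_apart
  have apart_of_mixed : ∀ i ∈ B.inside x s u, ∀ j ∉ B.inside x s u, B.Conflict i j →
      B.Apart x' i j := by
    intro i hi j hj hc
    rw [inside_eq_row_union_row, Finset.mem_union] at hi
    rcases hi with hi | hi
    · simpa only [Apart, htop i hi, hout j hj] using ha.apart i hi j hj hc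
    · have := hb_apart i hi j hj hc
      simp only [Apart, hbottom i hi, hout j hj, reflect] at this ⊢
      lia
  intro i j hij hc
  by_cases hi : i ∈ B.inside x s u <;> by_cases hj : j ∈ B.inside x s u
  · exact ha.apart_of_mem_inside hx hb htop hbottom hi hj hij hc
  · exact apart_of_mixed i hi j hj hc
  · exact (apart_of_mixed j hj i hi hc.symm).symm
  · exact (hx hij hc).congr (hout i hi) (hout j hj)

theorem IsFlush.isBlock {v : Bool} (h : B.IsFlush v x s u p a) (hi : i ∈ B.row v x s u)
    (hx' : ∀ j ∈ B.row v x s u, x' j = a j) :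
    B.IsBlock x' {j ∈ B.inside x s u | B.kind j = B.kind i} := by
  have hblock := h.isSorted.isBlock
    (fun j hj k hk => (mem_row.1 hj).2.trans (mem_row.1 hk).2.symm) hi
  have hrow : ({j ∈ B.row v x s u | B.kind j = B.kind i} : Finset ι) =
      {j ∈ B.inside x s u | B.kind j = B.kind i} := by
    ext j
    have := (mem_row.1 hi).2
    simp only [Finset.mem_filter, mem_row, kind, Prod.mk.injEq]
    grind
  rw [← hrow]
  exact hblock.congr fun j hj => hx' j (Finset.mem_of_mem_filter j hj)

theorem rearrangeable_of_fits (hx : B.IsPlacement x)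
    (hs : ∀ e, B.Crosses x s e → B.Fits false (B.meeting x s u) e)
    (hu : ∀ e, B.Crosses x u e → B.Fits true (B.meeting x s u) e) :
    B.Rearrangeable x s u (B.kinds (B.inside x s u)).card := by
  obtain ⟨p, a, ha⟩ := exists_isFlush hx hs
  obtain ⟨q, b, hb⟩ := exists_isFlush (v := true) (s := -u) (u := -s) hx.reflect
    (by simpa only [crosses_reflect, meeting_reflect])
  let x' := fun i => if i ∈ B.row false x s u then a i
    else if i ∈ B.row true x s u then B.reflect b i else x i
  have htop : ∀ i ∈ B.row false x s u, x' i = a i := fun i hi => if_pos hi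
  have hbottom : ∀ i ∈ B.row true x s u, x' i = B.reflect b i := fun i hi =>
    (if_neg (Finset.disjoint_right.1 disjoint_row hi)).trans (if_pos hi)
  have hbottom' : ∀ i ∈ B.row true (B.reflect x) (-u) (-s), B.reflect x' i = b i :=
    fun i hi => by
      rw [reflect, hbottom i (by rwa [row_reflect] at hi)]
      simp [reflect]
  have hout : ∀ i ∉ B.inside x s u, x' i = x i := fun i hi => by
    rw [inside_eq_row_union_row, Finset.mem_union, not_or] at hi
    exact (if_neg hi.1).trans (if_neg hi.2)
  refine ⟨x', hout, fun i hi => ?_, ha.isPlacement hx hb htop hbottom hout,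
    grouped_of_isBlock_kind fun i hi => ?_⟩ <;>
    rw [inside_eq_row_union_row, Finset.mem_union] at hi <;> rcases hi with hi | hi
  · rw [htop i hi]
    exact ⟨ha.le_pos i hi, ha.end_le i hi⟩
  · rw [← row_reflect] at hi
    have hle := hb.le_pos i hi
    have hend := hb.end_le i hi
    rw [← hbottom' i hi, reflect] at hle hend
    lia
  · exact ha.isBlock hi htop
  · have := (hb.isBlock (by rwa [row_reflect]) hbottom').reflect
    rwa [reflect_reflect, inside_reflect] at this

end Middle

section Rearrangement

variable {m : ℕ} {L R : ℤ}

theorem two_mul_three_pow_add_le {N : ℕ} (m : ℕ) (hN : 0 < N) :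
    3 ^ m * (N - 1) + N + 1 + 3 ^ m * (N - 1) + 1 ≤ 3 ^ (m + 1) * N := by
  obtain ⟨N, rfl⟩ := Nat.exists_eq_add_one.2 hN
  have : N + 3 ≤ 3 ^ m * (N + 3) := Nat.le_mul_of_pos_left _ (by positivity)
  rw [Nat.add_sub_cancel, pow_succ]
  lia

theorem exists_cuts (hx : B.IsPlacement x) (hlr : l ≤ r)
    (hl : {i | B.Crosses x l i}.Subsingleton) (hr : {i | B.Crosses x r i}.Subsingleton)
    {Z : Finset ι} (hZ : B.meeting x l r ⊆ Z) :
    ∃ s u, (l ≤ s ∧ s ≤ u ∧ u ≤ r) ∧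
      {i | B.Crosses x s i}.Subsingleton ∧ {i | B.Crosses x u i}.Subsingleton ∧
      (l < s → ∀ i ∈ B.meeting x l s, ¬(B.bottom i = false ∧ B.IsDominant Z i)) ∧
      (u < r → ∀ i ∈ B.meeting x u r, ¬(B.bottom i = true ∧ B.IsDominant Z i)) ∧
      (s < u → (∀ e, B.Crosses x s e → B.Fits false Z e) ∧
        ∀ e, B.Crosses x u e → B.Fits true Z e) := by
  obtain ⟨s, hls, hsr, hs, hleft, hs_fits⟩ := exists_cut_left (Q := B.Fits false Z)
    (P := fun i => B.bottom i = false ∧ B.IsDominant Z i) hx hlr hl hr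
    fun i _ e he ⟨hi, hdom⟩ hfits => conflict_of_not_fits hi hdom (hZ he) hfits
  obtain ⟨u, hsu, hur, hu, hright, hu_fits⟩ := exists_cut_right (Q := B.Fits true Z)
    (P := fun i => B.bottom i = true ∧ B.IsDominant Z i) hx hsr hs hr
    fun i _ e he ⟨hi, hdom⟩ hfits =>
      conflict_of_not_fits hi hdom (hZ (meeting_mono hls le_rfl he)) hfits
  exact ⟨s, u, ⟨hls, hsu, hur⟩, hs, hu, hleft, hright, fun h =>
    ⟨hs_fits.resolve_left (h.trans_le hur).ne, hu_fits.resolve_left h.ne'⟩⟩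

theorem rearrangeable_of_forall_fits (hx : B.IsPlacement x) {Z : Finset ι}
    (hZ : B.meeting x l r ⊆ Z) (hlr : l ≤ r)
    (hfits : l < r → (∀ e, B.Crosses x l e → B.Fits false Z e) ∧
      ∀ e, B.Crosses x r e → B.Fits true Z e) : B.Rearrangeable x l r (B.kinds Z).card := by
  rcases hlr.eq_or_lt with rfl | hlr
  · exact (rearrangeable_self hx).mono (Nat.zero_le _)
  · exact (rearrangeable_of_fits hx (fun e he => ((hfits hlr).1 e he).anti hZ)
      fun e he => ((hfits hlr).2 e he).anti hZ).mono
        (Finset.card_le_card (kinds_mono (inside_subset_meeting.trans hZ)))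

theorem rearrangeable_of_forall_not_active (hx : B.IsPlacement x) (hlr : l ≤ r)
    (h : ∀ i ∈ B.meeting x l r, ¬B.Active (B.meeting x l r) i) :
    B.Rearrangeable x l r (B.kinds (B.meeting x l r)).card :=
  rearrangeable_of_forall_fits hx subset_rfl hlr fun hlt =>
    ⟨fun _ he => fits_of_not_active h (mem_meeting.2 ⟨he.1.trans hlt, he.2⟩),
      fun _ he => fits_of_not_active h (mem_meeting.2 ⟨he.1, hlt.trans he.2⟩)⟩

theorem rearrangeable_strip (hx : B.IsPlacement x) (hlr : l ≤ r)
    (hl : {i | B.Crosses x l i}.Subsingleton) (hr : {i | B.Crosses x r i}.Subsingleton)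
    (hm : (B.activeHeights (B.meeting x l r)).card ≤ m) :
    B.Rearrangeable x l r (3 ^ m * (B.kinds (B.meeting x l r)).card) := by
  induction m generalizing l r with
  | zero =>
    rw [pow_zero, one_mul]
    refine rearrangeable_of_forall_not_active hx hlr fun i hi hact => ?_
    have := card_activeHeights_lt (Z' := ∅) (v := true) ⟨i, hi, hact⟩ (by simp) (by simp)
    lia
  | succ m ih =>
    set Z := B.meeting x l r
    by_cases hact : ∃ i ∈ Z, B.Active Z i
    · obtain ⟨s, u, ⟨hls, hsu, hur⟩, hs, hu, hleft, hright, hfits⟩ :=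
        exists_cuts hx hlr hl hr (subset_refl Z)
      have hpart : ∀ {a b v}, a ≤ b → B.meeting x a b ⊆ Z →
          {i | B.Crosses x a i}.Subsingleton → {i | B.Crosses x b i}.Subsingleton →
          (a < b → ∀ i ∈ B.meeting x a b, ¬(B.bottom i = v ∧ B.IsDominant Z i)) →
          B.Rearrangeable x a b (3 ^ m * ((B.kinds Z).card - 1)) := by
        intro a b v hab hZ ha hb hdom
        rcases hab.eq_or_lt with rfl | hlt
        · exact (rearrangeable_self hx).mono (Nat.zero_le _)
        · have hheights := card_activeHeights_lt hact hZ (hdom hlt)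
          have hkinds := card_kinds_lt hact hZ (hdom hlt)
          exact (ih hab ha hb (by lia)).mono (Nat.mul_le_mul_left _ (by lia))
      have hmiddle := rearrangeable_of_forall_fits hx
        (meeting_mono hls hur : B.meeting x s u ⊆ Z) hsu hfits
      have hN : 0 < (B.kinds Z).card := by
        obtain ⟨i, hi, -⟩ := hact
        exact Finset.card_pos.2 ⟨_, Finset.mem_image_of_mem _ hi⟩
      exact (((hpart hls (meeting_mono le_rfl (hsu.trans hur)) hl hs hleft).append hmiddle hs hls
        hsu).append (hpart hur (meeting_mono (hls.trans hsu) le_rfl) hu hr hright) hu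
        (hls.trans hsu) hur).mono (two_mul_three_pow_add_le m hN)
    · push Not at hact
      exact (rearrangeable_of_forall_not_active hx hlr hact).mono
        (Nat.le_mul_of_pos_left _ (by positivity))

theorem exists_grouped_rearrangement (hx : B.IsPlacement x) (hL : ∀ i, L ≤ x i)
    (hR : ∀ i, x i + B.width i ≤ R) :
    ∃ x', (∀ i, x i = L ∨ x i + B.width i = R → x' i = x i) ∧
      (∀ i, L ≤ x' i ∧ x' i + B.width i ≤ R) ∧ B.IsPlacement x' ∧
      B.Grouped x' {i | ¬(x i = L ∨ x i + B.width i = R)}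
        (6 ^ (({i | B.bottom i = true} : Finset ι).image B.height).card *
          (Finset.univ.image B.height).card) := by
  by_cases hmovable : ∃ i, ¬(x i = L ∨ x i + B.width i = R)
  · obtain ⟨i, hi⟩ := hmovable
    rw [not_or] at hi
    obtain ⟨l, hLl, hl, hl_iff⟩ := exists_left_border hx hL ⟨i, hi.1⟩
    obtain ⟨r, hrR, hr, hr_iff⟩ := exists_right_border hx hR ⟨i, hi.2⟩
    have hlr : l ≤ r := by
      have := (hl_iff i).1 hi.1
      have := (hr_iff i).1 hi.2
      have := B.width_pos i
      lia
    have hinside : ({i | ¬(x i = L ∨ x i + B.width i = R)} : Finset ι) = B.inside x l r := by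
      ext i
      simp only [Finset.mem_filter_univ, not_or, mem_inside, ← hl_iff, ← hr_iff, ne_eq]
    obtain ⟨x', hfix, hin, hx', hgrouped⟩ := rearrangeable_strip hx hlr hl hr
      ((Finset.card_le_card (activeHeights_mono (Finset.subset_univ _))).trans
        (card_activeHeights_le Finset.univ))
    refine ⟨x', fun i hi => hfix i
      (by rwa [← hinside, Finset.mem_filter_univ, not_not]), fun i => ?_, hx', ?_⟩
    · by_cases hi : i ∈ B.inside x l r
      · exact ⟨hLl.trans (hin i hi).1, (hin i hi).2.trans hrR⟩
      · rw [hfix i hi]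
        exact ⟨hL i, hR i⟩
    · rw [hinside]
      exact hgrouped.mono (three_pow_mul_le
        (Finset.card_le_card (Finset.image_subset_image (Finset.subset_univ _)))
        ((Finset.card_le_card (kinds_mono (Finset.subset_univ _))).trans
          (card_kinds_le Finset.univ)))
  · push Not at hmovable
    refine ⟨x, fun _ _ => rfl, fun i => ⟨hL i, hR i⟩, hx, ?_⟩
    rw [Finset.filter_false_of_mem fun i _ => not_not.2 (hmovable i)]
    exact grouped_empty

end Rearrangement

end Strips

section Packing

variable {wd ht y : ι → ℕ} {w h : ℕ}

/-- The rectangles of a packing of a box of height `h` in which every rectangle touches the top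
or the bottom edge; those which touch both count as attached to the bottom. -/
def ofPacking (wd ht y : ι → ℕ) (h : ℕ) (hwd : ∀ i, 0 < wd i) : EdgeFamily ι where
  width i := wd i
  width_pos i := Nat.cast_pos.2 (hwd i)
  height := ht
  bottom i := decide (y i = 0)
  boxHeight := h

theorem rectDisjoint_iff {x : ι → ℕ} (hwd : ∀ i, 0 < wd i) (hht : ∀ i, 0 < ht i)
    (htouch : ∀ i, y i = 0 ∨ y i + ht i = h) :
    RectDisjoint (x i) (y i) (wd i) (ht i) (x j) (y j) (wd j) (ht j) ↔
      ((ofPacking wd ht y h hwd).Conflict i j →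
        (ofPacking wd ht y h hwd).Apart (fun i => x i) i j) := by
  have := hht i
  have := hht j
  have := htouch i
  have := htouch j
  simp only [RectDisjoint, Conflict, Clash, Apart, ofPacking, ne_eq, decide_eq_decide]
  lia

theorem isPacking_iff {x : ι → ℕ} (hwd : ∀ i, 0 < wd i) (hht : ∀ i, 0 < ht i)
    (htouch : ∀ i, y i = 0 ∨ y i + ht i = h) :
    IsPacking wd ht x y w h ↔ (∀ i, x i + wd i ≤ w ∧ y i + ht i ≤ h) ∧
      (ofPacking wd ht y h hwd).IsPlacement (fun i => x i) := by
  simp only [IsPacking, IsPlacement, rectDisjoint_iff hwd hht htouch]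

theorem unmovable_iff {x : ι → ℕ} (htouch : ∀ i, y i = 0 ∨ y i + ht i = h) :
    Unmovable w h wd ht x y i ↔ x i = 0 ∨ x i + wd i = w := by
  have := htouch i
  rw [Unmovable]
  tauto

theorem Grouped.exists_nat {x : ι → ℕ} {hwd : ∀ i, 0 < wd i} {M : Finset ι} {n : ℕ}
    (hM : (ofPacking wd ht y h hwd).Grouped (fun i => x i) M n) :
    ∃ (c : ι → ℕ) (X : ℕ → ℕ), (∀ i ∈ M, c i < n) ∧
      (∀ i ∈ M, ∀ j ∈ M, c i = c j → ht i = ht j ∧ (y i = 0 ↔ y j = 0)) ∧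
      ∀ i ∈ M, X (c i) ≤ x i ∧ x i + wd i ≤ X (c i) + ∑ j ∈ M with c j = c i, wd j := by
  obtain ⟨c, hc, hblock⟩ := hM
  choose hkind a ha using hblock
  simp only [Finset.mem_filter, kind, ofPacking, Prod.mk.injEq, decide_eq_decide,
    ← Nat.cast_sum] at hkind ha
  refine ⟨c, fun k => (a k).toNat, hc, fun i hi j hj hij => ?_, fun i hi => ?_⟩
  · exact hkind (c i) i ⟨hi, rfl⟩ j ⟨hj, hij.symm⟩
  · have := ha (c i) i ⟨hi, rfl⟩
    lia

theorem exists_isPacking_grouped [Fintype ι] {x : ι → ℕ} (hwd : ∀ i, 0 < wd i)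
    (hht : ∀ i, 0 < ht i) (hpack : IsPacking wd ht x y w h)
    (htouch : ∀ i, y i = 0 ∨ y i + ht i = h) :
    ∃ x', IsPacking wd ht x' y w h ∧ (∀ i, Unmovable w h wd ht x y i → x' i = x i) ∧
      (ofPacking wd ht y h hwd).Grouped (fun i => x' i)
        {i | ¬Unmovable w h wd ht x y i}
        (6 ^ (({i | y i = 0} : Finset ι).image ht).card * (Finset.univ.image ht).card) := by
  obtain ⟨hbox, hx⟩ := (isPacking_iff hwd hht htouch).1 hpack
  obtain ⟨z, hfix, hz_box, hz, hgrouped⟩ := exists_grouped_rearrangement (L := 0) (R := w) hx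
    (fun i => Int.natCast_nonneg _) (fun i => by simpa [ofPacking] using mod_cast (hbox i).1)
  lift z to ι → ℕ using fun i => (hz_box i).1
  have hborder : ∀ i, ((x i : ℤ) = 0 ∨ x i + (ofPacking wd ht y h hwd).width i = w) ↔
      Unmovable w h wd ht x y i := fun i => by
    rw [unmovable_iff htouch]
    simp only [ofPacking]
    lia
  simp only [hborder] at hfix hgrouped
  refine ⟨z, (isPacking_iff hwd hht htouch).2 ⟨fun i => ⟨?_, (hbox i).2⟩, hz⟩,
    fun i hi => Nat.cast_injective (hfix i hi), ?_⟩
  · have := (hz_box i).2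
    simp only [ofPacking] at this
    lia
  · simpa [ofPacking] using hgrouped

end Packing

end EdgeFamily

/-- Rearrangement lemma (Nadiradze–Wiese, Section 4): if every rectangle of a feasible
packing of `[0,w]×[0,h]` touches the top or the bottom edge of the box, the heights take at
most `Γ` values, and the heights of the rectangles touching the bottom take at most `k`
values, then the rectangles can be rearranged, keeping all `y`-coordinates and the (at most
four) unmovable rectangles fixed, so that the movable rectangles form at most `6^k·Γ`
groups, each group consisting of rectangles of one common height touching a common edge and
tiling a contiguous rectangular sub-box of that height. -/
theorem rearrangement_into_subboxes
    (w h : ℕ) (hw : 0 < w) (hh : 0 < h)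
    (ι : Type*) [Fintype ι] (wd ht : ι → ℕ) (hpos : ∀ i, 0 < wd i ∧ 0 < ht i)
    (x y : ι → ℕ) (hpack : IsPacking wd ht x y w h)
    (htouch : ∀ i, y i = 0 ∨ y i + ht i = h)
    (Γ k : ℕ)
    (hΓ : (Finset.univ.image ht).card ≤ Γ)
    (hk : ((Finset.univ.filter (fun i => y i = 0)).image ht).card ≤ k) :
    ∃ (x' : ι → ℕ) (n : ℕ) (c : ι → ℕ) (X : ℕ → ℕ),
      IsPacking wd ht x' y w h ∧
      (∀ i, Unmovable w h wd ht x y i → x' i = x i) ∧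
      n ≤ 6 ^ k * Γ ∧
      (∀ i, ¬Unmovable w h wd ht x y i → c i < n) ∧
      (∀ i j, ¬Unmovable w h wd ht x y i → ¬Unmovable w h wd ht x y j → c i = c j →
        ht i = ht j ∧ (y i = 0 ↔ y j = 0)) ∧
      (∀ i j, ¬Unmovable w h wd ht x y i → ¬Unmovable w h wd ht x y j → i ≠ j →
        c i = c j → x' i + wd i ≤ x' j ∨ x' j + wd j ≤ x' i) ∧
      (∀ i, ¬Unmovable w h wd ht x y i →
        X (c i) ≤ x' i ∧
        x' i + wd i ≤ X (c i) +
          ∑ j ∈ Finset.univ.filter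
            (fun j => ¬Unmovable w h wd ht x y j ∧ c j = c i), wd j) := by
  have hwd := fun i => (hpos i).1
  have hht := fun i => (hpos i).2
  obtain ⟨x', hx', hfix, hgrouped⟩ := EdgeFamily.exists_isPacking_grouped hwd hht hpack htouch
  obtain ⟨c, X, hc, hkind, hX⟩ := hgrouped.exists_nat
  simp only [Finset.mem_filter_univ, Finset.filter_filter] at hc hkind hX
  refine ⟨x', _, c, X, hx', hfix,
    Nat.mul_le_mul (Nat.pow_le_pow_right (by simp) hk) hΓ, hc,
    fun i j hi hj => hkind i hi j hj, fun i j hi hj hij hcij => ?_, hX⟩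
  have hdisj := hx'.2 hij
  have hedge := hkind i hi j hj hcij
  have := htouch i
  have := htouch j
  have := hht i
  have := hht j
  simp only [RectDisjoint] at hdisj
  lia
end
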